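/- Let w be a nonempty binary word with Parikh vector (a,b). Then every conjugate of w is balanced (i.e., w is circularly balanced) if and only if w is a conjugate of the lower Christoffel word w_{a,b}. -/

import Mathlib

/-- The lower Christoffel word `w_{a,b}`: the binary word of length `a+b` whose
`k`-th letter (1-based) is `⌊kb/(a+b)⌋ - ⌊(k-1)b/(a+b)⌋` (with `false = 0`, `true = 1`). -/
def lowerChristoffel (a b : ℕ) : List Bool :=
  (List.range (a + b)).map fun i => decide ((i + 1) * b / (a + b) ≠ i * b / (a + b))

/-- The upper Christoffel word `W_{a,b}`: the binary word of length `a+b` whose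
`k`-th letter is `⌈kb/(a+b)⌉ - ⌈(k-1)b/(a+b)⌉`. -/
def upperChristoffel (a b : ℕ) : List Bool :=
  (List.range (a + b)).map fun i =>
    decide (((i + 1) * b + (a + b) - 1) / (a + b) ≠ (i * b + (a + b) - 1) / (a + b))

/-- `p` is a period of `w`: `p` is positive and `w_i = w_{i+p}` for all valid indices. -/
def HasPeriod (w : List Bool) (p : ℕ) : Prop :=
  0 < p ∧ ∀ i, i + p < w.length → w.getD i false = w.getD (i + p) false

/-- A central word: a binary word with two coprime periods `p`, `q` and length `p + q - 2`. -/
def IsCentral (w : List Bool) : Prop :=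
  ∃ p q : ℕ, Nat.Coprime p q ∧ HasPeriod w p ∧ HasPeriod w q ∧ w.length + 2 = p + q

/-- A binary word is balanced if any two factors of the same length have numbers of `1`s
differing by at most `1`. -/
def BalancedWord (w : List Bool) : Prop :=
  ∀ u v : List Bool, u <:+: w → v <:+: w → u.length = v.length →
    |(u.count true : ℤ) - (v.count true : ℤ)| ≤ 1

/-- `w^m`: the `m`-th power of the word `w`. -/
def wpow (w : List Bool) (m : ℕ) : List Bool := (List.replicate m w).flatten

/-- A word is primitive if it is not a proper power. -/
def IsPrimitiveWord (w : List Bool) : Prop := ¬ ∃ (v : List Bool) (m : ℕ), 2 ≤ m ∧ w = wpow v m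

/-- A Lyndon word: a nonempty primitive word lexicographically strictly smaller than all
of its proper nonempty suffixes (for the order `0 < 1`, i.e. `false < true`). -/
def IsLyndonWord (w : List Bool) : Prop :=
  w ≠ [] ∧ IsPrimitiveWord w ∧
    ∀ u v : List Bool, w = u ++ v → u ≠ [] → v ≠ [] → List.Lex (· < ·) w v

/-- `p` is the minimal period of `w`. -/
def IsMinPeriod (w : List Bool) (p : ℕ) : Prop :=
  HasPeriod w p ∧ ∀ q : ℕ, HasPeriod w q → p ≤ q

/-- `u` is a factor of the infinite periodic word `w^ω`. -/
def IsOmegaFactor (u w : List Bool) : Prop := ∃ m : ℕ, u <:+: wpow w m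

/-- A primitive Christoffel word: a lower or upper Christoffel word `w_{a,b}` with
`gcd(a,b) = 1`. -/
def IsPrimitiveChristoffel (c : List Bool) : Prop :=
  ∃ a b : ℕ, Nat.Coprime a b ∧ (c = lowerChristoffel a b ∨ c = upperChristoffel a b)

/-! Let `P k` be the number of ones in the prefix of length `k` of `w^ω`, where `w` has length `n`
and `b` ones. Circular balancedness of `w` means that the increments of `P` over intervals of equal
length differ by at most `1`. The deviation `n * P k - k * b` is `n`-periodic, and both sides of
the equivalence say that its oscillation is less than `n`. On the balanced side, the `n`
consecutive increments of length `k` starting at any `i` sum to `k * b`, each of them is at most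
one more than the first, and the first itself is smaller than that, so
`k * b < n * (P (i + k) - P i + 1)`. On the Christoffel side, reading `w^ω` from a point `s` of
maximal deviation gives `P (s + k) - P s = ⌊k * b / n⌋`.
-/

open scoped AddConstMap

section QuasiPeriodic

variable {n : ℕ} {b : ℤ}

/-- Increments of `P` over intervals of equal length differ by at most `1`. Exchanging `i` and `j`
gives the bound on the absolute value. -/
def HasBalancedIncrements (P : ℕ → ℤ) : Prop :=
  ∀ i j k, P (i + k) - P i ≤ P (j + k) - P j + 1

/-- The deviation of `P` from the line of slope `b / n`, scaled by `n` so as to stay integral. -/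
def deviation (P : ℕ →+c[n, b] ℤ) (k : ℕ) : ℤ :=
  n * P k - k * b

/-- The graph of `P` lies in a strip of vertical width less than `1` around the line of slope
`b / n`. -/
def LiesInStrip (P : ℕ →+c[n, b] ℤ) : Prop :=
  ∀ i j, deviation P i < deviation P j + n

theorem map_add_mul_period (P : ℕ →+c[n, b] ℤ) (i q : ℕ) : P (i + q * n) = P i + q * b := by
  simpa using AddConstMapClass.map_add_nsmul P i q

theorem deviation_periodic (P : ℕ →+c[n, b] ℤ) : Function.Periodic (deviation P) n := by
  intro k
  simp only [deviation, AddConstMapClass.map_add_const]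
  push_cast
  ring

theorem increment_periodic (P : ℕ →+c[n, b] ℤ) (k : ℕ) :
    Function.Periodic (fun i => P (i + k) - P i) n := by
  intro i
  simp only [add_right_comm i n k, AddConstMapClass.map_add_const, add_sub_add_right_eq_sub]

theorem period_mul_increment (P : ℕ →+c[n, b] ℤ) (i k : ℕ) :
    n * (P (i + k) - P i) = deviation P (i + k) - deviation P i + k * b := by
  simp only [deviation]
  push_cast
  ring

theorem LiesInStrip.hasBalancedIncrements {P : ℕ →+c[n, b] ℤ} (hP : LiesInStrip P) :
    HasBalancedIncrements P := by
  intro i j k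
  have h_mul : n * (P (i + k) - P i - (P (j + k) - P j)) < (n : ℤ) * 2 := by
    rw [mul_sub, period_mul_increment, period_mul_increment]
    linarith [hP (i + k) i, hP j (j + k)]
  linarith [lt_of_mul_lt_mul_left h_mul (Int.natCast_nonneg n)]

theorem sum_increments_eq (P : ℕ →+c[n, b] ℤ) (i k : ℕ) :
    ∑ t ∈ Finset.range n, (P (i + t * k + k) - P (i + t * k)) = k * b := by
  have h_telescope := Finset.sum_range_sub (fun t => P (i + t * k)) n
  simpa [add_mul, add_assoc, mul_comm n k, map_add_mul_period] using h_telescope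

theorem HasBalancedIncrements.mul_lt {P : ℕ →+c[n, b] ℤ} (hn : 0 < n)
    (hP : HasBalancedIncrements P) (i k : ℕ) : k * b < n * (P (i + k) - P i + 1) := by
  calc k * b = ∑ t ∈ Finset.range n, (P (i + t * k + k) - P (i + t * k)) :=
        (sum_increments_eq P i k).symm
    _ < ∑ _t ∈ Finset.range n, (P (i + k) - P i + 1) :=
        Finset.sum_lt_sum (fun t _ => hP _ _ _) ⟨0, by simpa using hn, by simp⟩
    _ = n * (P (i + k) - P i + 1) := by simp

theorem HasBalancedIncrements.liesInStrip {P : ℕ →+c[n, b] ℤ} (hn : 0 < n)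
    (hP : HasBalancedIncrements P) : LiesInStrip P := by
  intro i j
  obtain ⟨k, hk⟩ := Nat.exists_eq_add_of_le
    (le_add_left (Nat.le_mul_of_pos_right i hn) : i ≤ j + i * n)
  rw [← (deviation_periodic P).nat_mul i j, Nat.cast_id, hk]
  linarith [hP.mul_lt hn i k, period_mul_increment P i k]

theorem hasBalancedIncrements_iff_liesInStrip {P : ℕ →+c[n, b] ℤ} (hn : 0 < n) :
    HasBalancedIncrements P ↔ LiesInStrip P :=
  ⟨fun h => h.liesInStrip hn, LiesInStrip.hasBalancedIncrements⟩

theorem increment_eq_ediv_iff (P : ℕ →+c[n, b] ℤ) (hn : 0 < n) (s k : ℕ) :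
    P (s + k) - P s = k * b / n ↔
      deviation P (s + k) ≤ deviation P s ∧ deviation P s < deviation P (s + k) + n := by
  rw [eq_comm, Int.ediv_eq_iff_of_pos (by exact_mod_cast hn), mul_comm _ (n : ℤ),
    period_mul_increment]
  constructor <;> rintro ⟨h_le, h_lt⟩ <;> constructor <;> linarith

theorem exists_deviation_le (P : ℕ →+c[n, b] ℤ) (hn : 0 < n) :
    ∃ s, ∀ i, deviation P i ≤ deviation P s := by
  obtain ⟨s, -, hs⟩ := (Finset.range n).exists_max_image (deviation P) ⟨0, by simpa using hn⟩
  refine ⟨s, fun i => ?_⟩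
  rw [← (deviation_periodic P).map_mod_nat i]
  exact hs _ (by simpa using Nat.mod_lt i hn)

theorem liesInStrip_iff_exists_increment_eq_ediv {P : ℕ →+c[n, b] ℤ} (hn : 0 < n) :
    LiesInStrip P ↔ ∃ s, ∀ k ≤ n, P (s + k) - P s = k * b / n := by
  simp only [increment_eq_ediv_iff P hn]
  constructor
  · intro hP
    obtain ⟨s, hs⟩ := exists_deviation_le P hn
    exact ⟨s, fun k _ => ⟨hs _, hP _ _⟩⟩
  · rintro ⟨s, hs⟩ i j
    have h_strip (i : ℕ) :
        deviation P i ≤ deviation P s ∧ deviation P s < deviation P i + n := by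
      obtain ⟨m, hm⟩ := Nat.exists_eq_add_of_le
        (le_add_left (Nat.le_mul_of_pos_right s hn) : s ≤ i + s * n)
      have h_mod : deviation P i = deviation P (s + m % n) := by
        rw [← (deviation_periodic P).nat_mul s i, Nat.cast_id, hm,
          ← (deviation_periodic P).map_mod_nat (s + m), ← Nat.add_mod_mod,
          (deviation_periodic P).map_mod_nat]
      rw [h_mod]
      exact hs _ (Nat.mod_lt m hn).le
    linarith [(h_strip i).1, (h_strip j).2]

/-- Balancedness of the increments of `P`, tested only on pairs of intervals contained in a common
interval of length `n`. -/
def HasLocallyBalancedIncrements (P : ℕ →+c[n, b] ℤ) : Prop :=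
  ∀ i j k, i + k ≤ j + n → j + k ≤ i + n → P (i + k) - P i ≤ P (j + k) - P j + 1

theorem HasLocallyBalancedIncrements.of_lt {P : ℕ →+c[n, b] ℤ}
    (hP : HasLocallyBalancedIncrements P) {i j k : ℕ} (hi : i < n) (hj : j < n) (hk : k < n) :
    P (i + k) - P i ≤ P (j + k) - P j + 1 := by
  by_cases h_local : i + k ≤ j + n ∧ j + k ≤ i + n
  · exact hP i j k h_local.1 h_local.2
  by_cases h_overlap : i ≤ j + k ∧ j ≤ i + k
  · -- The complements of the two intervals modulo `n` lie in a common interval of length `n`.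
    have h_compl (x : ℕ) : P (x + k + (n - k)) = P x + b := by
      rw [show x + k + (n - k) = x + n by omega, AddConstMapClass.map_add_const]
    have := hP (j + k) (i + k) (n - k) (by omega) (by omega)
    rw [h_compl, h_compl] at this
    linarith
  · -- The intervals are disjoint; moving the left one by a full period brings them together.
    have h_shift (x : ℕ) : P (x + n + k) - P (x + n) = P (x + k) - P x :=
      increment_periodic P k x
    rcases lt_or_gt_of_ne (show i ≠ j by omega) with h_lt | h_gt
    · rw [← h_shift i]
      exact hP (i + n) j k (by omega) (by omega)
    · rw [← h_shift j]
      exact hP i (j + n) k (by omega) (by omega)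

theorem hasLocallyBalancedIncrements_iff {P : ℕ →+c[n, b] ℤ} (hn : 0 < n) :
    HasLocallyBalancedIncrements P ↔ HasBalancedIncrements P := by
  refine ⟨fun hP i j k => ?_, fun hP i j k _ _ => hP i j k⟩
  have h_reduce (x : ℕ) :
      P (x + k) - P x = P (x % n + k % n) - P (x % n) + (k / n : ℕ) * b := by
    have h_mod := (increment_periodic P k).map_mod_nat x
    have h_div := map_add_mul_period P (x % n + k % n) (k / n)
    rw [add_assoc, mul_comm, Nat.mod_add_div] at h_div
    linarith
  rw [h_reduce i, h_reduce j]
  linarith [hP.of_lt (Nat.mod_lt i hn) (Nat.mod_lt j hn) (Nat.mod_lt k hn)]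

end QuasiPeriodic

section Words

variable {α : Type*}

theorem forall_append_swap_iff_forall_rotate {w : List α} {p : List α → Prop} :
    (∀ u v, w = u ++ v → p (v ++ u)) ↔ ∀ s, p (w.rotate s) := by
  constructor
  · intro h s
    rw [List.rotate_eq_drop_append_take_mod]
    exact h _ _ (List.take_append_drop _ _).symm
  · rintro h u v rfl
    simpa only [List.rotate_append_length_eq] using h u.length

theorem exists_append_swap_iff_exists_rotate {w : List α} {p : List α → Prop} :
    (∃ u v, w = u ++ v ∧ p (v ++ u)) ↔ ∃ s, p (w.rotate s) := by
  simpa using (forall_append_swap_iff_forall_rotate (w := w) (p := fun x => ¬ p x)).not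

theorem infix_iff_exists_take_drop {u w : List α} :
    u <:+: w ↔ ∃ i k, i + k ≤ w.length ∧ u = (w.drop i).take k := by
  constructor
  · rintro ⟨p, q, rfl⟩
    exact ⟨p.length, u.length, by simp, by simp⟩
  · rintro ⟨i, k, -, rfl⟩
    exact (List.take_prefix _ _).isInfix.trans (List.drop_suffix _ _).isInfix

theorem balancedWord_iff_count_take_drop {w : List Bool} :
    BalancedWord w ↔ ∀ i j k, i + k ≤ w.length → j + k ≤ w.length →
      (((w.drop i).take k).count true : ℤ) ≤ ((w.drop j).take k).count true + 1 := by
  simp only [BalancedWord, infix_iff_exists_take_drop]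
  constructor
  · intro h i j k hi hj
    have := h _ _ ⟨i, k, hi, rfl⟩ ⟨j, k, hj, rfl⟩ (by simp; omega)
    linarith [(abs_le.1 this).2]
  · rintro h _ _ ⟨i, k, hi, rfl⟩ ⟨j, l, hj, rfl⟩ h_len
    obtain rfl : k = l := by simp at h_len; omega
    exact abs_le.2 ⟨by linarith [h j i k hj hi], by linarith [h i j k hi hj]⟩

theorem count_map_range_add [DecidableEq α] (f : ℕ → α) (a : α) (s k : ℕ) :
    ((List.range (s + k)).map f).count a =
      ((List.range s).map f).count a + ((List.range' s k).map f).count a := by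
  rw [List.range_eq_range', List.range_eq_range', ← List.count_append, ← List.map_append]
  simpa using congrArg (fun l => (l.map f).count a) (List.range'_append_1 (s := 0)).symm

variable [Inhabited α]

/-- The infinite periodic word `w^ω`. For `w = []` it is constantly `default`. -/
def periodicExtension (w : List α) (i : ℕ) : α :=
  w.getI (i % w.length)

theorem rotate_eq_map_periodicExtension (w : List α) (s : ℕ) :
    w.rotate s = (List.range' s w.length).map (periodicExtension w) := by
  refine List.ext_getElem (by simp) fun i hi _ => ?_
  have h_pos : 0 < w.length := by simp at hi; omega
  simp [List.getElem_rotate, periodicExtension, add_comm s i,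
    List.getI_eq_getElem _ (Nat.mod_lt (i + s) h_pos)]

variable [DecidableEq α]

/-- The number of occurrences of the letter `a` in the prefix of length `k` of `w^ω`, as a function
of `k`. It is valued in `ℤ` so that its increments can be subtracted. -/
def prefixCount (w : List α) (a : α) : ℕ →+c[w.length, (w.count a : ℤ)] ℤ where
  toFun k := ((List.range k).map (periodicExtension w)).count a
  map_add_const' k := by
    rw [count_map_range_add, ← rotate_eq_map_periodicExtension, (w.rotate_perm k).count_eq]
    push_cast
    rfl

theorem prefixCount_add (w : List α) (a : α) (i k : ℕ) :
    prefixCount w a (i + k) =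
      prefixCount w a i + ((List.range' i k).map (periodicExtension w)).count a :=
  (congrArg Nat.cast (count_map_range_add (periodicExtension w) a i k)).trans (Nat.cast_add _ _)

theorem count_take_drop_rotate (w : List α) (a : α) (s : ℕ) {i k : ℕ} (h : i + k ≤ w.length) :
    ((((w.rotate s).drop i).take k).count a : ℤ) =
      prefixCount w a (s + i + k) - prefixCount w a (s + i) := by
  have h_factor : ((w.rotate s).drop i).take k =
      (List.range' (s + i) k).map (periodicExtension w) := by
    rw [rotate_eq_map_periodicExtension, ← List.map_drop, ← List.map_take, List.drop_range',
      List.take_range'_of_length_ge (by omega), mul_one]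
  rw [h_factor, prefixCount_add, add_sub_cancel_left]

theorem forall_balancedWord_rotate_iff (w : List Bool) :
    (∀ s, BalancedWord (w.rotate s)) ↔ HasLocallyBalancedIncrements (prefixCount w true) := by
  simp only [balancedWord_iff_count_take_drop, List.length_rotate]
  constructor
  · intro h i j k hi hj
    have h_rotate := h (min i j) (i - min i j) (j - min i j) k (by omega) (by omega)
    rwa [count_take_drop_rotate w _ _ (by omega), count_take_drop_rotate w _ _ (by omega),
      Nat.add_sub_of_le (min_le_left i j), Nat.add_sub_of_le (min_le_right i j)] at h_rotate
  · intro h s i j k hi hj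
    rw [count_take_drop_rotate w _ _ hi, count_take_drop_rotate w _ _ hj]
    exact h _ _ _ (by omega) (by omega)

end Words

section Christoffel

theorem count_true_take_succ (w : List Bool) {k : ℕ} (hk : k < w.length) :
    (w.take (k + 1)).count true = (w.take k).count true + if w[k] then 1 else 0 := by
  rw [List.take_add_one, List.getElem?_eq_getElem hk, List.count_append]
  cases w[k] <;> rfl

theorem eq_of_count_true_take_eq {u v : List Bool} (h_len : u.length = v.length)
    (h : ∀ k ≤ u.length, (u.take k).count true = (v.take k).count true) : u = v := by
  refine List.ext_getElem h_len fun k hu hv => ?_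
  have h_succ := h (k + 1) hu
  rw [count_true_take_succ u hu, count_true_take_succ v hv, h k hu.le, add_right_inj] at h_succ
  cases hu' : u[k] <;> cases hv' : v[k] <;> simp_all

theorem length_lowerChristoffel (a b : ℕ) : (lowerChristoffel a b).length = a + b := by
  simp [lowerChristoffel]

theorem count_true_take_lowerChristoffel (a b : ℕ) {k : ℕ} (hk : k ≤ a + b) :
    ((lowerChristoffel a b).take k).count true = k * b / (a + b) := by
  induction k with
  | zero => simp
  | succ k ih =>
    have h_mono : k * b / (a + b) ≤ (k + 1) * b / (a + b) :=
      Nat.div_le_div_right (Nat.mul_le_mul_right _ k.le_succ)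
    have h_step : (k + 1) * b / (a + b) ≤ k * b / (a + b) + 1 := by
      rw [← Nat.add_div_right _ (by omega : 0 < a + b), Nat.succ_mul]
      exact Nat.div_le_div_right (by omega)
    rw [count_true_take_succ _ (by rwa [length_lowerChristoffel]), ih (by omega)]
    simp only [lowerChristoffel, List.getElem_map, List.getElem_range, decide_eq_true_eq]
    split_ifs <;> omega

theorem lowerChristoffel_eq_iff {a b : ℕ} {w : List Bool} (h_len : w.length = a + b) :
    lowerChristoffel a b = w ↔ ∀ k ≤ a + b, (w.take k).count true = k * b / (a + b) := by
  constructor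
  · rintro rfl k hk
    exact count_true_take_lowerChristoffel a b hk
  · intro h
    refine eq_of_count_true_take_eq (by rw [length_lowerChristoffel, h_len]) fun k hk => ?_
    rw [length_lowerChristoffel] at hk
    rw [count_true_take_lowerChristoffel a b hk, h k hk]

theorem lowerChristoffel_eq_rotate_iff (w : List Bool) (s : ℕ) :
    lowerChristoffel (w.count false) (w.count true) = w.rotate s ↔
      ∀ k ≤ w.length, prefixCount w true (s + k) - prefixCount w true s =
        k * w.count true / w.length := by
  have h_len : w.count false + w.count true = w.length := List.count_not_add_count w true
  rw [lowerChristoffel_eq_iff (by rw [List.length_rotate, h_len]), h_len]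
  refine forall₂_congr fun k hk => ?_
  have h_count := count_take_drop_rotate w true s (i := 0) (k := k) (by omega)
  rw [List.drop_zero, add_zero] at h_count
  rw [← h_count]
  norm_cast

end Christoffel

/-- A nonempty binary word with Parikh vector `(a,b)` is circularly balanced
iff it is a conjugate of the lower Christoffel word `w_{a,b}`. -/
theorem stmt6 (w : List Bool) (hw : w ≠ []) :
    (∀ u v : List Bool, w = u ++ v → BalancedWord (v ++ u)) ↔
    (∃ u v : List Bool, w = u ++ v ∧
      lowerChristoffel (w.count false) (w.count true) = v ++ u) := by
  have hn : 0 < w.length := List.length_pos_iff.2 hw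
  calc (∀ u v : List Bool, w = u ++ v → BalancedWord (v ++ u))
      ↔ ∀ s, BalancedWord (w.rotate s) := forall_append_swap_iff_forall_rotate
    _ ↔ HasLocallyBalancedIncrements (prefixCount w true) := forall_balancedWord_rotate_iff w
    _ ↔ HasBalancedIncrements (prefixCount w true) := hasLocallyBalancedIncrements_iff hn
    _ ↔ LiesInStrip (prefixCount w true) := hasBalancedIncrements_iff_liesInStrip hn
    _ ↔ ∃ s, ∀ k ≤ w.length, prefixCount w true (s + k) - prefixCount w true s =
          k * w.count true / w.length := liesInStrip_iff_exists_increment_eq_ediv hn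
    _ ↔ ∃ s, lowerChristoffel (w.count false) (w.count true) = w.rotate s := by
        simp only [lowerChristoffel_eq_rotate_iff]
    _ ↔ ∃ u v : List Bool, w = u ++ v ∧
          lowerChristoffel (w.count false) (w.count true) = v ++ u :=
        exists_append_swap_iff_exists_rotate.symm
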